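/- arXiv:1603.06069 — 2 statements merged into one kernel-verified Lean document; each statement's English description precedes it below -/
import Mathlib

section
/- For every n ≥ 1, the sum of the quadrature weights of the first rule over the nodes lying in [a₁,b₁] is bounded by the total mass of μ₁: ∑_{k=1}^{n} λ_{k,2n}^{(1)} ≤ μ₁([a₁,b₁]). -/
open MeasureTheory

/-- The data of the diagonal type II multiple orthogonal polynomial for an
Angelesco system with two intervals: its `2n` zeros, listed in increasing
order, with `n` of them in `(a₁,b₁)` and `n` of them in `(a₂,b₂)`, and the
multiple orthogonality conditions. -/
structure Angelesco (μ₁ μ₂ : Measure ℝ) (a₁ b₁ a₂ b₂ : ℝ) (n : ℕ) where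
  x : Fin (2 * n) → ℝ
  mono : StrictMono x
  mem1 : ∀ i : Fin (2 * n), (i : ℕ) < n → x i ∈ Set.Ioo a₁ b₁
  mem2 : ∀ i : Fin (2 * n), n ≤ (i : ℕ) → x i ∈ Set.Ioo a₂ b₂
  orth1 : ∀ k < n, ∫ t, (∏ i, (t - x i)) * t ^ k ∂μ₁ = 0
  orth2 : ∀ k < n, ∫ t, (∏ i, (t - x i)) * t ^ k ∂μ₂ = 0

/-- The quadrature weight `λ_{k,2n}^{(μ)} = ∫ ℓ_{k,2n} dμ`, where `ℓ_{k,2n}` is the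
`k`-th fundamental Lagrange polynomial for the nodes `x_{1,2n} < ⋯ < x_{2n,2n}`. -/
noncomputable def qweight {μ₁ μ₂ : Measure ℝ} {a₁ b₁ a₂ b₂ : ℝ} {n : ℕ}
    (ad : Angelesco μ₁ μ₂ a₁ b₁ a₂ b₂ n) (μ : Measure ℝ) (k : Fin (2 * n)) : ℝ :=
  ∫ t, (Lagrange.basis Finset.univ ad.x k).eval t ∂μ

/-!
The interpolatory rule integrates every polynomial of degree less than `3n` exactly. Apply it to `1`
and to `q = p² g`, where `p` is the nodal polynomial of the left nodes and `g` interpolates `1 / p²`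
at the right nodes: since `q` is `0` at the left nodes and `1` at the right ones, the weights of the
left nodes sum to `∫ 1 dμ₁ - ∫ q dμ₁`. As a function of `t`, `1 / p(t)²` is a product of factors
`1 / (t - x)` with `x` to the left of all right nodes, so its divided differences there alternate in
sign. Hence all terms of the Newton form of `g` are nonnegative to the left of the right nodes, and
`∫ q dμ₁ ≥ 0`.
-/

open Polynomial Lagrange

/-- The polynomials `c₀ + c₁ (y₀ - X) + c₂ (y₀ - X) (y₁ - X) + ⋯` with all `cₖ ≥ 0`, as many
coefficients as nodes `y₀, y₁, …`. For distinct nodes these are the interpolants of the functions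
whose divided differences there alternate in sign. The form is encoded by the Horner scheme. -/
inductive AlternatingNewton {R : Type*} [CommRing R] [LE R] : List R → R[X] → Prop
  | nil : AlternatingNewton [] 0
  | cons {y : R} {ys : List R} {g : R[X]} {c : R} (hc : 0 ≤ c) (hg : AlternatingNewton ys g) :
      AlternatingNewton (y :: ys) (C c - (X - C y) * g)

namespace AlternatingNewton

section CommRing

variable {R : Type*} [CommRing R] [PartialOrder R] {ys : List R} {g : R[X]}

theorem degree_lt (hg : AlternatingNewton ys g) : g.degree < ys.length := by
  induction hg with
  | nil => simp
  | @cons y ys g c _ _ ih =>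
    have hmul : ((X - C y) * g).degree < (ys.length + 1 : WithBot ℕ) :=
      calc ((X - C y) * g).degree ≤ (X - C y).degree + g.degree := degree_mul_le _ _
        _ ≤ g.degree + 1 := by rw [add_comm]; gcongr; exact degree_X_sub_C_le y
        _ < ys.length + 1 := WithBot.add_lt_add_right (by simp) ih
    have hconst : (C c).degree < (ys.length + 1 : WithBot ℕ) :=
      degree_C_le.trans_lt (by exact_mod_cast Nat.succ_pos _)
    exact_mod_cast (degree_sub_le _ _).trans_lt (max_lt hconst hmul)

protected theorem zero (ys : List R) : AlternatingNewton ys 0 := by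
  induction ys with
  | nil => exact nil
  | cons y ys ih => simpa using cons (y := y) le_rfl ih

theorem exists_eval_eq_const (ys : List R) {c : R} (hc : 0 ≤ c) :
    ∃ g, AlternatingNewton ys g ∧ ∀ y ∈ ys, g.eval y = c := by
  cases ys with
  | nil => exact ⟨0, nil, by simp⟩
  | cons y ys => exact ⟨C c - (X - C y) * 0, cons hc (.zero ys), by simp⟩

theorem eval_nonneg [IsOrderedRing R] (hg : AlternatingNewton ys g) {t : R}
    (ht : ∀ y ∈ ys, t ≤ y) : 0 ≤ g.eval t := by
  induction hg with
  | nil => simp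
  | @cons y ys g c hc _ ih =>
    rw [List.forall_mem_cons] at ht
    have hsum : 0 ≤ c + (y - t) * g.eval t :=
      add_nonneg hc (mul_nonneg (sub_nonneg.2 ht.1) (ih ht.2))
    convert hsum using 1
    simp only [eval_sub, eval_C, eval_mul, eval_X]
    ring

end CommRing

section Field

variable {K : Type*} [Field K] [LinearOrder K] [IsStrictOrderedRing K] {ys : List K} {g : K[X]}

/- The constant `d` is what makes the induction close: with `e = (c + d) / (y - x)`, the polynomial
`e - (X - y) g'` works for `c - (X - y) g` as soon as `g'` works for `g` and the constant `e`. -/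
theorem exists_sub_mul_eval_eq_eval_add (hg : AlternatingNewton ys g) {x : K}
    (hx : ∀ y ∈ ys, x < y) {d : K} (hd : 0 ≤ d) :
    ∃ g', AlternatingNewton ys g' ∧ ∀ t ∈ ys, (t - x) * g'.eval t = g.eval t + d := by
  induction hg generalizing d with
  | nil => exact ⟨0, nil, by simp⟩
  | @cons y ys g c hc _ ih =>
    rw [List.forall_mem_cons] at hx
    have hyx : 0 < y - x := sub_pos.2 hx.1
    obtain ⟨e, he, hey⟩ : ∃ e, 0 ≤ e ∧ e * (y - x) = c + d :=
      ⟨(c + d) / (y - x), div_nonneg (add_nonneg hc hd) hyx.le, div_mul_cancel₀ _ hyx.ne'⟩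
    obtain ⟨g', hg', hg'_eval⟩ := ih hx.2 he
    refine ⟨_, cons he hg', List.forall_mem_cons.2 ⟨?_, fun t ht => ?_⟩⟩
    · simp only [eval_sub, eval_C, eval_mul, eval_X]
      linear_combination hey
    · simp only [eval_sub, eval_C, eval_mul, eval_X]
      linear_combination hey - (t - y) * hg'_eval t ht

theorem exists_nodal_eval_mul_eval_eq {ι : Type*} {s : Finset ι} {x : ι → K}
    (hg : AlternatingNewton ys g) (hx : ∀ i ∈ s, ∀ y ∈ ys, x i < y) :
    ∃ g', AlternatingNewton ys g' ∧ ∀ y ∈ ys, (nodal s x).eval y * g'.eval y = g.eval y := by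
  induction s using Finset.cons_induction generalizing g with
  | empty => exact ⟨g, hg, by simp⟩
  | cons i s hi ih =>
    rw [Finset.forall_mem_cons] at hx
    obtain ⟨g₁, hg₁, hg₁_eval⟩ := hg.exists_sub_mul_eval_eq_eval_add hx.1 le_rfl
    obtain ⟨g₂, hg₂, hg₂_eval⟩ := ih hg₁ hx.2
    refine ⟨g₂, hg₂, fun y hy => ?_⟩
    rw [eval_nodal, Finset.prod_cons, ← eval_nodal, mul_assoc, hg₂_eval y hy, hg₁_eval y hy,
      add_zero]

end Field

end AlternatingNewton

theorem exists_eval_eq_zero_one_and_nonneg {K ι : Type*} [Field K] [LinearOrder K]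
    [IsStrictOrderedRing K] {l r : Finset ι} {x : ι → K} (hx : ∀ i ∈ l, ∀ j ∈ r, x i < x j) :
    ∃ q : K[X], q.degree < (2 * l.card + r.card : ℕ) ∧ (∀ i ∈ l, q.eval (x i) = 0) ∧
      (∀ j ∈ r, q.eval (x j) = 1) ∧ ∀ t, (∀ j ∈ r, t ≤ x j) → 0 ≤ q.eval t := by
  have hsep : ∀ i ∈ l, ∀ y ∈ r.toList.map x, x i < y := by simpa using hx
  obtain ⟨g₀, hg₀, hg₀_eval⟩ :=
    AlternatingNewton.exists_eval_eq_const (r.toList.map x) zero_le_one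
  obtain ⟨g₁, hg₁, hg₁_eval⟩ := hg₀.exists_nodal_eval_mul_eval_eq hsep
  obtain ⟨g, hg, hg_eval⟩ := hg₁.exists_nodal_eval_mul_eval_eq hsep
  refine ⟨nodal l x ^ 2 * g, ?_, fun i hi => ?_, fun j hj => ?_, fun t ht => ?_⟩
  · have hdeg : g.degree < r.card := by simpa using hg.degree_lt
    rw [degree_mul, degree_pow, degree_nodal, nsmul_eq_mul, Nat.cast_add, Nat.cast_mul]
    exact WithBot.add_lt_add_left (by exact_mod_cast WithBot.coe_ne_bot) hdeg
  · simp [eval_nodal_at_node hi]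
  · have hj' : x j ∈ r.toList.map x := List.mem_map_of_mem (Finset.mem_toList.2 hj)
    rw [eval_mul, eval_pow, sq, mul_assoc, hg_eval _ hj', hg₁_eval _ hj', hg₀_eval _ hj']
  · rw [eval_mul, eval_pow]
    exact mul_nonneg (sq_nonneg _) (hg.eval_nonneg (by simpa using ht))

theorem exists_eq_interpolate_add_nodal_mul {K ι : Type*} [Field K] [DecidableEq ι] {s : Finset ι}
    {x : ι → K} (hinj : Set.InjOn x s) {m : ℕ} {q : K[X]} (hq : q.degree < (s.card + m : ℕ)) :
    ∃ h : K[X], h.degree < m ∧ q = interpolate s x (fun i => q.eval (x i)) + nodal s x * h := by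
  have hrem : q %ₘ nodal s x = interpolate s x (fun i => q.eval (x i)) := by
    refine eq_interpolate_of_eval_eq _ hinj ?_ fun i hi => ?_
    · simpa only [degree_nodal] using degree_modByMonic_lt q (nodal_monic (s := s) (v := x))
    · exact eval₂_modByMonic_eq_self_of_root (eval_nodal_at_node hi)
  have hdiv : q = interpolate s x (fun i => q.eval (x i)) + nodal s x * (q /ₘ nodal s x) := by
    rw [← hrem, modByMonic_add_div]
  refine ⟨q /ₘ nodal s x, ?_, hdiv⟩
  have hinterp : (interpolate s x fun i => q.eval (x i)).degree < (s.card + m : ℕ) :=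
    (degree_interpolate_lt _ hinj).trans_le (by exact_mod_cast Nat.le_add_right _ _)
  have hmul : (nodal s x * (q /ₘ nodal s x)).degree < (s.card + m : ℕ) := by
    rw [eq_sub_iff_add_eq'.2 hdiv.symm]
    exact (degree_sub_le _ _).trans_lt (max_lt hq hinterp)
  rw [degree_mul, degree_nodal, Nat.cast_add] at hmul
  exact lt_of_add_lt_add_left hmul

section Quadrature

variable {μ : Measure ℝ}

theorem integrable_polynomial_eval (hmom : ∀ k : ℕ, Integrable (fun t : ℝ => t ^ k) μ) (p : ℝ[X]) :
    Integrable (fun t => p.eval t) μ := by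
  simp only [eval_eq_sum_range]
  exact integrable_finsetSum _ fun k _ => (hmom k).const_mul _

theorem integral_eval_mul_eq_zero_of_degree_lt
    (hmom : ∀ k : ℕ, Integrable (fun t : ℝ => t ^ k) μ) {m : ℕ} {p q : ℝ[X]}
    (horth : ∀ k < m, ∫ t, p.eval t * t ^ k ∂μ = 0) (hq : q.degree < m) :
    ∫ t, (p * q).eval t ∂μ = 0 := by
  have hexpand (t : ℝ) :
      (p * q).eval t = ∑ k ∈ q.support, q.coeff k * (p.eval t * t ^ k) := by
    rw [eval_mul, eval_eq_sum (p := q), Polynomial.sum, Finset.mul_sum]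
    exact Finset.sum_congr rfl fun k _ => by ring
  have hint (k : ℕ) : Integrable (fun t => p.eval t * t ^ k) μ :=
    (integrable_polynomial_eval hmom (p * X ^ k)).congr (.of_forall fun t => by simp)
  simp only [hexpand]
  rw [integral_finsetSum _ fun k _ => (hint k).const_mul _]
  refine Finset.sum_eq_zero fun k hk => ?_
  have hk : k < m := by exact_mod_cast (le_degree_of_mem_supp k hk).trans_lt hq
  rw [integral_const_mul, horth k hk, mul_zero]

variable {ι : Type*} [DecidableEq ι] {s : Finset ι} {x : ι → ℝ}

/-- The weight at the node `x i` of the interpolatory quadrature rule for `μ` with nodes `x j`,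
`j ∈ s`. For `s = Finset.univ` and the nodes of an `Angelesco` system it unfolds to `qweight`. -/
noncomputable def interpolatoryWeight (μ : Measure ℝ) (s : Finset ι) (x : ι → ℝ) (i : ι) : ℝ :=
  ∫ t, (Lagrange.basis s x i).eval t ∂μ

theorem integral_interpolate (hmom : ∀ k : ℕ, Integrable (fun t : ℝ => t ^ k) μ) (v : ι → ℝ) :
    ∫ t, (interpolate s x v).eval t ∂μ = ∑ i ∈ s, v i * interpolatoryWeight μ s x i := by
  simp only [interpolate_apply, eval_finsetSum, eval_mul, eval_C, interpolatoryWeight]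
  rw [integral_finsetSum _ fun i _ => (integrable_polynomial_eval hmom _).const_mul _]
  simp only [integral_const_mul]

theorem integral_eval_eq_sum_interpolatoryWeight
    (hmom : ∀ k : ℕ, Integrable (fun t : ℝ => t ^ k) μ) (hinj : Set.InjOn x s)
    {m : ℕ} (horth : ∀ k < m, ∫ t, (nodal s x).eval t * t ^ k ∂μ = 0)
    {q : ℝ[X]} (hq : q.degree < (s.card + m : ℕ)) :
    ∫ t, q.eval t ∂μ = ∑ i ∈ s, q.eval (x i) * interpolatoryWeight μ s x i := by
  obtain ⟨h, hh, hqh⟩ := exists_eq_interpolate_add_nodal_mul hinj hq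
  calc ∫ t, q.eval t ∂μ
      = ∫ t, (interpolate s x fun i => q.eval (x i)).eval t ∂μ
          + ∫ t, (nodal s x * h).eval t ∂μ := by
        rw [← integral_add (integrable_polynomial_eval hmom _) (integrable_polynomial_eval hmom _)]
        simp only [← eval_add, ← hqh]
    _ = ∑ i ∈ s, q.eval (x i) * interpolatoryWeight μ s x i := by
        rw [integral_eval_mul_eq_zero_of_degree_lt hmom horth hh, add_zero,
          integral_interpolate hmom]

end Quadrature

theorem angelesco_sum_positive_weights_le_general {μ : Measure ℝ} {ι : Type*} [DecidableEq ι]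
    {s l : Finset ι} {x : ι → ℝ}
    (hmom : ∀ k : ℕ, Integrable (fun t : ℝ => t ^ k) μ) (hinj : Set.InjOn x s) (hls : l ⊆ s)
    (hsep : ∀ i ∈ l, ∀ j ∈ s \ l, x i < x j) (hsupp : ∀ᵐ t ∂μ, ∀ j ∈ s \ l, t ≤ x j)
    (horth : ∀ k < l.card, ∫ t, (nodal s x).eval t * t ^ k ∂μ = 0) :
    ∑ i ∈ l, interpolatoryWeight μ s x i ≤ μ.real Set.univ := by
  obtain rfl | hl := l.eq_empty_or_nonempty
  · simp
  obtain ⟨q, hq_deg, hq_left, hq_right, hq_nonneg⟩ := exists_eval_eq_zero_one_and_nonneg hsep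
  have hcard : 2 * l.card + (s \ l).card = s.card + l.card := by
    have := Finset.card_sdiff_add_card_eq_card hls
    lia
  have hpos : 0 ≤ ∫ t, q.eval t ∂μ :=
    integral_nonneg_of_ae (hsupp.mono fun t ht => hq_nonneg t ht)
  have hright : ∫ t, q.eval t ∂μ = ∑ j ∈ s \ l, interpolatoryWeight μ s x j := by
    have hzero : ∑ i ∈ l, q.eval (x i) * interpolatoryWeight μ s x i = 0 :=
      Finset.sum_eq_zero fun i hi => by rw [hq_left i hi, zero_mul]
    rw [integral_eval_eq_sum_interpolatoryWeight hmom hinj horth (hcard ▸ hq_deg),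
      ← Finset.sum_sdiff hls, hzero, add_zero]
    exact Finset.sum_congr rfl fun j hj => by rw [hq_right j hj, one_mul]
  have htotal : μ.real Set.univ = ∑ i ∈ s, interpolatoryWeight μ s x i := by
    have hdeg : (1 : ℝ[X]).degree < (s.card + l.card : ℕ) := by
      rw [degree_one]
      exact_mod_cast Nat.add_pos_right _ hl.card_pos
    simpa using integral_eval_eq_sum_interpolatoryWeight hmom hinj horth hdeg
  have hsplit := Finset.sum_sdiff hls (f := interpolatoryWeight μ s x)
  linarith

/-- **The positive weights of the first rule sum to at most the total mass of `μ₁`:**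
`∑_{k=1}^{n} λ_{k,2n}^{(1)} ≤ μ₁([a₁,b₁])`. -/
theorem angelesco_sum_positive_weights_le
    (μ₁ μ₂ : Measure ℝ) [IsFiniteMeasure μ₁] [IsFiniteMeasure μ₂]
    (a₁ b₁ a₂ b₂ : ℝ) (hab₁ : a₁ < b₁) (hgap : b₁ ≤ a₂) (hab₂ : a₂ < b₂)
    (hsupp₁ : μ₁ (Set.Icc a₁ b₁)ᶜ = 0) (hsupp₂ : μ₂ (Set.Icc a₂ b₂)ᶜ = 0)
    (hinf₁ : ∀ s : Finset ℝ, μ₁ ((s : Set ℝ))ᶜ ≠ 0)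
    (hinf₂ : ∀ s : Finset ℝ, μ₂ ((s : Set ℝ))ᶜ ≠ 0)
    (hmom₁ : ∀ k : ℕ, Integrable (fun t : ℝ => t ^ k) μ₁)
    (hmom₂ : ∀ k : ℕ, Integrable (fun t : ℝ => t ^ k) μ₂)
    (n : ℕ) (hn : 1 ≤ n) (ad : Angelesco μ₁ μ₂ a₁ b₁ a₂ b₂ n) :
    ∑ i ∈ Finset.univ.filter (fun i : Fin (2 * n) => (i : ℕ) < n), qweight ad μ₁ i ≤
      (μ₁ (Set.Icc a₁ b₁)).toReal := by
  have hleft : ∀ i ∈ Finset.univ.filter (fun i : Fin (2 * n) => (i : ℕ) < n), ad.x i < b₁ :=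
    fun i hi => (ad.mem1 i (Finset.mem_filter.1 hi).2).2
  have hright : ∀ j ∈ Finset.univ \ Finset.univ.filter (fun i : Fin (2 * n) => (i : ℕ) < n),
      b₁ < ad.x j :=
    fun j hj => hgap.trans_lt (ad.mem2 j (by simpa using hj)).1
  have hcard : (Finset.univ.filter fun i : Fin (2 * n) => (i : ℕ) < n).card = n := by
    rw [Fin.card_filter_val_lt]; lia
  rw [← measureReal_def, measureReal_congr (ae_eq_univ.2 hsupp₁)]
  refine angelesco_sum_positive_weights_le_general hmom₁ ad.mono.injective.injOn
    (Finset.subset_univ _) (fun i hi j hj => (hleft i hi).trans (hright j hj)) ?_ ?_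
  · filter_upwards [mem_ae_iff.2 hsupp₁] with t ht j hj using ht.2.trans (hright j hj).le
  · simpa only [hcard, eval_nodal] using ad.orth1
end

section
/- For every n ≥ 1 and every 1 ≤ j ≤ n, one has λ_{j,2n}^{(1)} ≥ λ_m(x_{j,2n}; μ₁), where m = ⌈3n/2⌉ is the least integer ≥ 3n/2. -/
open MeasureTheory

/-- The Christoffel function `λ_m(x;μ) = inf { ∫ P² dμ : deg P ≤ m − 1, P(x) = 1 }`. -/
noncomputable def christoffel (μ : Measure ℝ) (m : ℕ) (x : ℝ) : ℝ :=
  sInf {I : ℝ | ∃ P : Polynomial ℝ,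
    P.natDegree ≤ m - 1 ∧ P.eval x = 1 ∧ I = ∫ t, (P.eval t) ^ 2 ∂μ}

/-!
Divide a polynomial `f` of degree `< N + d` by the nodal polynomial `w` of the `N` nodes. The
quotient has degree `< d`, so `w` is orthogonal to it, and the remainder interpolates `f` at the
nodes. Hence the interpolatory rule integrates `f` exactly.

Suppose that all nodes outside a set `A` of at most `d` nodes lie to the right of the measure. For
a node `x k` outside `A`, factor its Lagrange polynomial as `ℓ = g * h`, where `g` carries the nodes
in `A` and `h` the others. Since `deg g ≤ d` and `g (x k) = 1`, exactness on `ℓ * g` turns the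
weight at `x k` into `∫ g² h dμ`, and `h` has constant sign to the left of its nodes. So the weights
outside `A` alternate in sign from left to right, the first one being nonnegative.

Finally, let `Q` vanish at every node except `x j`, with `j ∈ A`, and the nodes outside `A` whose
weight is nonpositive by this alternation. The rule is exact on `Q²`, and dropping the nonpositive
terms gives `∫ Q² dμ ≤ λ_j Q(x j)²`.
-/

section

open Finset Polynomial

section Moments

variable {μ : Measure ℝ}

lemma integrable_eval_of_integrable_pow (hmom : ∀ k : ℕ, Integrable (fun t : ℝ => t ^ k) μ)
    (f : ℝ[X]) : Integrable (fun t => f.eval t) μ := by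
  simp only [eval_eq_sum_range]
  exact integrable_finsetSum _ fun i _ => (hmom i).const_mul _

lemma integral_eval_mul_eq_zero_of_degree_lt_s10
    (hmom : ∀ k : ℕ, Integrable (fun t : ℝ => t ^ k) μ) {w g : ℝ[X]} {d : ℕ}
    (horth : ∀ k < d, ∫ t, w.eval t * t ^ k ∂μ = 0) (hg : g.degree < d) :
    ∫ t, (w * g).eval t ∂μ = 0 := by
  have expand (t : ℝ) :
      (w * g).eval t = ∑ k ∈ g.support, g.coeff k * (w.eval t * t ^ k) := by
    rw [eval_mul, eval_eq_sum (p := g), Polynomial.sum, mul_sum]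
    exact sum_congr rfl fun _ _ => mul_left_comm _ _ _
  have integrable_term (k : ℕ) : Integrable (fun t => w.eval t * t ^ k) μ :=
    (integrable_eval_of_integrable_pow hmom (w * X ^ k)).congr (.of_forall fun t => by simp)
  simp only [expand]
  rw [integral_finsetSum _ fun k _ => (integrable_term k).const_mul _]
  refine sum_eq_zero fun k hk => ?_
  have hkd : k < d := by exact_mod_cast (le_degree_of_mem_supp k hk).trans_lt hg
  rw [integral_const_mul, horth k hkd, mul_zero]

end Moments

lemma degree_divByMonic_lt_of_degree_lt_add {R : Type*} [Ring R] {f w : R[X]} (hw : w.Monic)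
    {d : ℕ} (hf : f.degree < (w.natDegree + d : ℕ)) : (f /ₘ w).degree < d := by
  nontriviality R
  rcases lt_or_ge f.degree w.degree with hlt | hle
  · rw [(divByMonic_eq_zero_iff hw).2 hlt, degree_zero]
    exact WithBot.bot_lt_coe d
  · rw [← degree_add_divByMonic hw hle, degree_eq_natDegree hw.ne_zero, Nat.cast_add] at hf
    exact lt_of_add_lt_add_left hf

section Lagrange

variable {F ι : Type*} [Field F] [DecidableEq ι] {s : Finset ι} {v : ι → F}

lemma modByMonic_nodal_eq_interpolate (hv : Set.InjOn v s) (f : F[X]) :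
    f %ₘ Lagrange.nodal s v = Lagrange.interpolate s v fun i => f.eval (v i) := by
  refine Lagrange.eq_interpolate_of_eval_eq _ hv ?_ fun i hi => ?_
  · simpa only [Lagrange.degree_nodal] using degree_modByMonic_lt f Lagrange.nodal_monic
  · rw [modByMonic_eq_sub_mul_div, eval_sub, eval_mul, Lagrange.eval_nodal_at_node hi, zero_mul,
      sub_zero]

lemma basis_eq_basis_insert_mul_basis_sdiff {A : Finset ι} (hA : A ⊆ s) {k : ι} (hk : k ∉ A) :
    Lagrange.basis s v k = Lagrange.basis (insert k A) v k * Lagrange.basis (s \ A) v k := by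
  have hA' : A ⊆ s.erase k := subset_erase.2 ⟨hA, hk⟩
  simp only [Lagrange.basis, erase_insert hk]
  rw [← prod_sdiff hA', erase_sdiff_comm, mul_comm]

lemma eval_basisDivisor (x y t : F) :
    (Lagrange.basisDivisor x y).eval t = (x - y)⁻¹ * (t - y) := by
  simp [Lagrange.basisDivisor]

lemma neg_one_pow_mul_eval_basis_nonneg [LinearOrder F] [IsStrictOrderedRing F] {t : F}
    (ht : ∀ i ∈ s, t ≤ v i) (k : ι) :
    0 ≤ (-1) ^ #{i ∈ s | v i < v k} * (Lagrange.basis s v k).eval t := by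
  have signs : (-1 : F) ^ #{i ∈ s | v i < v k}
      = ∏ i ∈ s.erase k, if v i < v k then -1 else 1 := by
    rw [← prod_const, prod_filter]
    exact (prod_erase _ (by simp)).symm
  rw [signs, Lagrange.basis, eval_prod, ← prod_mul_distrib]
  refine prod_nonneg fun i hi => ?_
  have hti : t - v i ≤ 0 := sub_nonpos.2 (ht i (mem_of_mem_erase hi))
  rw [eval_basisDivisor]
  split_ifs with hik
  · rw [neg_one_mul, ← mul_neg]
    exact mul_nonneg (inv_nonneg.2 (sub_pos.2 hik).le) (neg_nonneg.2 hti)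
  · rw [one_mul]
    exact mul_nonneg_of_nonpos_of_nonpos (inv_nonpos.2 (sub_nonpos.2 (not_lt.1 hik))) hti

end Lagrange

/-- The weight at `x k` of the interpolatory quadrature rule for `μ` whose nodes are the values of
`x`; this is `qweight` for an arbitrary finite family of nodes. -/
noncomputable def lagrangeWeight {ι : Type*} [Fintype ι] [DecidableEq ι] (μ : Measure ℝ)
    (x : ι → ℝ) (k : ι) : ℝ :=
  ∫ t, (Lagrange.basis univ x k).eval t ∂μ

section Quadrature

variable {ι : Type*} [Fintype ι] [DecidableEq ι] {μ : Measure ℝ} {x : ι → ℝ} {d : ℕ}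

lemma integral_eval_interpolate (hmom : ∀ k : ℕ, Integrable (fun t : ℝ => t ^ k) μ) (r : ι → ℝ) :
    ∫ t, (Lagrange.interpolate univ x r).eval t ∂μ = ∑ k, lagrangeWeight μ x k * r k := by
  simp only [Lagrange.interpolate_apply, eval_finsetSum, eval_mul, eval_C]
  rw [integral_finsetSum _ fun k _ =>
    (integrable_eval_of_integrable_pow hmom (Lagrange.basis univ x k)).const_mul (r k)]
  simp only [integral_const_mul, lagrangeWeight, mul_comm]

lemma integral_eval_eq_sum_lagrangeWeight (hmom : ∀ k : ℕ, Integrable (fun t : ℝ => t ^ k) μ)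
    (hx : Function.Injective x) (horth : ∀ k < d, ∫ t, (∏ i, (t - x i)) * t ^ k ∂μ = 0)
    {f : ℝ[X]} (hf : f.degree < (Fintype.card ι + d : ℕ)) :
    ∫ t, f.eval t ∂μ = ∑ k, lagrangeWeight μ x k * f.eval (x k) := by
  set w := Lagrange.nodal univ x
  have hw : w.Monic := Lagrange.nodal_monic
  have quotient_degree_lt : (f /ₘ w).degree < d :=
    degree_divByMonic_lt_of_degree_lt_add hw (by simpa [w, Lagrange.natDegree_nodal] using hf)
  have integral_quotient : ∫ t, (w * (f /ₘ w)).eval t ∂μ = 0 :=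
    integral_eval_mul_eq_zero_of_degree_lt_s10 hmom
      (by simpa only [w, Lagrange.eval_nodal] using horth) quotient_degree_lt
  calc ∫ t, f.eval t ∂μ
      = ∫ t, ((f %ₘ w).eval t + (w * (f /ₘ w)).eval t) ∂μ := by
        simp only [← eval_add, modByMonic_add_div]
    _ = ∫ t, (f %ₘ w).eval t ∂μ := by
        rw [integral_add (integrable_eval_of_integrable_pow hmom _)
          (integrable_eval_of_integrable_pow hmom _), integral_quotient, add_zero]
    _ = ∑ k, lagrangeWeight μ x k * f.eval (x k) := by
        rw [modByMonic_nodal_eq_interpolate hx.injOn, integral_eval_interpolate hmom]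

lemma integral_eval_basis_mul (hmom : ∀ k : ℕ, Integrable (fun t : ℝ => t ^ k) μ)
    (hx : Function.Injective x) (horth : ∀ k < d, ∫ t, (∏ i, (t - x i)) * t ^ k ∂μ = 0)
    {g : ℝ[X]} (hg : g.natDegree ≤ d) (k : ι) :
    ∫ t, (Lagrange.basis univ x k * g).eval t ∂μ = lagrangeWeight μ x k * g.eval (x k) := by
  have natDegree_le : (Lagrange.basis univ x k * g).natDegree ≤ Fintype.card ι - 1 + d :=
    natDegree_mul_le_of_le (Lagrange.natDegree_basis hx.injOn (mem_univ k)).le hg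
  have card_pos : 0 < Fintype.card ι := Fintype.card_pos_iff.2 ⟨k⟩
  have degree_lt : (Lagrange.basis univ x k * g).degree < (Fintype.card ι + d : ℕ) :=
    (degree_le_of_natDegree_le natDegree_le).trans_lt (by exact_mod_cast (by omega))
  rw [integral_eval_eq_sum_lagrangeWeight hmom hx horth degree_lt, sum_eq_single k]
  · rw [eval_mul, Lagrange.eval_basis_self hx.injOn (mem_univ k), one_mul]
  · intro i _ hik
    rw [eval_mul, Lagrange.eval_basis_of_ne hik.symm (mem_univ i), zero_mul, mul_zero]
  · exact fun hk => absurd (mem_univ k) hk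

lemma lagrangeWeight_eq_integral_sq_mul (hmom : ∀ k : ℕ, Integrable (fun t : ℝ => t ^ k) μ)
    (hx : Function.Injective x) (horth : ∀ k < d, ∫ t, (∏ i, (t - x i)) * t ^ k ∂μ = 0)
    {A : Finset ι} (hA : #A ≤ d) {k : ι} (hk : k ∉ A) :
    lagrangeWeight μ x k = ∫ t, (Lagrange.basis (insert k A) x k).eval t ^ 2 *
      (Lagrange.basis Aᶜ x k).eval t ∂μ := by
  have hkA : k ∈ insert k A := mem_insert_self k A
  have natDegree_le : (Lagrange.basis (insert k A) x k).natDegree ≤ d := by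
    rwa [Lagrange.natDegree_basis hx.injOn hkA, card_insert_of_notMem hk, Nat.add_sub_cancel]
  have exact_on_product := integral_eval_basis_mul hmom hx horth natDegree_le k
  rw [Lagrange.eval_basis_self hx.injOn hkA, mul_one] at exact_on_product
  rw [← exact_on_product, basis_eq_basis_insert_mul_basis_sdiff (subset_univ A) hk,
    ← compl_eq_univ_sdiff]
  simp only [eval_mul]
  exact integral_congr_ae (.of_forall fun t => by ring)

lemma neg_one_pow_mul_lagrangeWeight_nonneg (hmom : ∀ k : ℕ, Integrable (fun t : ℝ => t ^ k) μ)
    (hx : Function.Injective x) (horth : ∀ k < d, ∫ t, (∏ i, (t - x i)) * t ^ k ∂μ = 0)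
    {A : Finset ι} (hA : #A ≤ d) (hright : ∀ᵐ t ∂μ, ∀ i ∉ A, t ≤ x i) {k : ι} (hk : k ∉ A) :
    0 ≤ (-1) ^ #{i ∈ Aᶜ | x i < x k} * lagrangeWeight μ x k := by
  rw [lagrangeWeight_eq_integral_sq_mul hmom hx horth hA hk, ← integral_const_mul]
  refine integral_nonneg_of_ae ?_
  filter_upwards [hright] with t ht
  rw [mul_left_comm]
  exact mul_nonneg (sq_nonneg _)
    (neg_one_pow_mul_eval_basis_nonneg (fun i hi => ht i (mem_compl.1 hi)) k)

end Quadrature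

section Christoffel

variable {μ : Measure ℝ} {m : ℕ}

lemma christoffel_le_integral_sq {P : ℝ[X]} (hdeg : P.natDegree ≤ m - 1) {y : ℝ}
    (hP : P.eval y = 1) : christoffel μ m y ≤ ∫ t, P.eval t ^ 2 ∂μ := by
  refine csInf_le ⟨0, ?_⟩ ⟨P, hdeg, hP, rfl⟩
  rintro _ ⟨R, _, _, rfl⟩
  exact integral_nonneg fun t => sq_nonneg _

lemma christoffel_mul_sq_le_integral_sq {Q : ℝ[X]} (hdeg : Q.natDegree ≤ m - 1) {y : ℝ}
    (hQ : Q.eval y ≠ 0) : christoffel μ m y * Q.eval y ^ 2 ≤ ∫ t, Q.eval t ^ 2 ∂μ := by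
  have normalized := christoffel_le_integral_sq (μ := μ) (P := C (Q.eval y)⁻¹ * Q)
    ((natDegree_C_mul_le _ _).trans hdeg) (by rw [eval_mul, eval_C, inv_mul_cancel₀ hQ])
  simp only [eval_mul, eval_C, mul_pow, integral_const_mul, inv_pow] at normalized
  rwa [inv_mul_eq_div, le_div_iff₀ (by positivity)] at normalized

lemma christoffel_le_lagrangeWeight {ι : Type*} [Fintype ι] [DecidableEq ι] {x : ι → ℝ} {d : ℕ}
    (hmom : ∀ k : ℕ, Integrable (fun t : ℝ => t ^ k) μ)
    (hx : Function.Injective x) (horth : ∀ k < d, ∫ t, (∏ i, (t - x i)) * t ^ k ∂μ = 0)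
    {S : Finset ι} (hSm : #S ≤ m - 1) (hSd : 2 * #S < Fintype.card ι + d) {j : ι} (hj : j ∉ S)
    (hneg : ∀ k ∉ S, k ≠ j → lagrangeWeight μ x k ≤ 0) :
    christoffel μ m (x j) ≤ lagrangeWeight μ x j := by
  set Q := Lagrange.nodal S x
  have hQj : Q.eval (x j) ≠ 0 :=
    Lagrange.eval_nodal_not_at_node fun i hi h => hj (hx h ▸ hi)
  have degree_lt : (Q ^ 2).degree < (Fintype.card ι + d : ℕ) := by
    rw [degree_pow, Lagrange.degree_nodal, nsmul_eq_mul]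
    exact_mod_cast hSd
  have drop_others : ∀ k ≠ j, lagrangeWeight μ x k * Q.eval (x k) ^ 2 ≤ 0 := by
    intro k hkj
    by_cases hk : k ∈ S
    · simp [Q, Lagrange.eval_nodal_at_node hk]
    · exact mul_nonpos_of_nonpos_of_nonneg (hneg k hk hkj) (sq_nonneg _)
  refine le_of_mul_le_mul_right ?_ (by positivity : 0 < Q.eval (x j) ^ 2)
  calc christoffel μ m (x j) * Q.eval (x j) ^ 2
      ≤ ∫ t, Q.eval t ^ 2 ∂μ :=
        christoffel_mul_sq_le_integral_sq (by rwa [Lagrange.natDegree_nodal]) hQj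
    _ = ∑ k, lagrangeWeight μ x k * Q.eval (x k) ^ 2 := by
        simpa only [eval_pow] using integral_eval_eq_sum_lagrangeWeight hmom hx horth degree_lt
    _ ≤ lagrangeWeight μ x j * Q.eval (x j) ^ 2 := by
        rw [← add_sum_erase univ _ (mem_univ j)]
        exact add_le_of_nonpos_right (sum_nonpos fun k hk => drop_others k (ne_of_mem_erase hk))

end Christoffel

section OrderedNodes

variable {N : ℕ}

lemma card_filter_le_val_and_lt (p : ℕ) (k : Fin N) :
    #{i : Fin N | p ≤ (i : ℕ) ∧ i < k} = (k : ℕ) - p := by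
  have image_val :
      ({i : Fin N | p ≤ (i : ℕ) ∧ i < k} : Finset (Fin N)).map Fin.valEmbedding = Ico p k := by
    ext i
    simp only [mem_map, mem_filter, mem_univ, true_and, Fin.valEmbedding_apply, mem_Ico]
    exact ⟨by rintro ⟨i, hi, rfl⟩; exact hi, fun hi => ⟨⟨i, hi.2.trans k.2⟩, hi, rfl⟩⟩
  rw [← card_map, image_val, Nat.card_Ico]

-- The subtraction is truncated, so the set contains every `i < p`.
lemma card_filter_even_val_sub (N p : ℕ) :
    #{i : Fin N | Even ((i : ℕ) - p)} = min N p + (N - p + 1) / 2 := by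
  induction N with
  | zero => simp
  | succ N ih =>
    rw [card_filter] at ih ⊢
    rw [Fin.sum_univ_castSucc]
    simp only [Fin.val_castSucc, Fin.val_last, ih]
    split_ifs with hN <;> rw [Nat.even_iff] at hN <;> omega

variable {μ : Measure ℝ} {x : Fin N → ℝ} {p : ℕ}

lemma lagrangeWeight_nonpos_of_odd (hmom : ∀ k : ℕ, Integrable (fun t : ℝ => t ^ k) μ)
    (hx : StrictMono x) (horth : ∀ k < p, ∫ t, (∏ i, (t - x i)) * t ^ k ∂μ = 0)
    (hright : ∀ᵐ t ∂μ, ∀ i : Fin N, p ≤ (i : ℕ) → t ≤ x i)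
    {k : Fin N} (hodd : Odd ((k : ℕ) - p)) : lagrangeWeight μ x k ≤ 0 := by
  set A : Finset (Fin N) := {i | (i : ℕ) < p}
  have notMem_A (i : Fin N) : i ∉ A ↔ p ≤ (i : ℕ) := by simp [A]
  have card_A : #A ≤ p := by simp [A, Fin.card_filter_val_lt]
  have hk : k ∉ A := (notMem_A k).2 (Nat.lt_of_sub_pos hodd.pos).le
  have card_left : #{i ∈ Aᶜ | x i < x k} = (k : ℕ) - p := by
    rw [← card_filter_le_val_and_lt p k]
    congr 1
    ext i
    simp [A, hx.lt_iff_lt]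
  have sign := neg_one_pow_mul_lagrangeWeight_nonneg hmom hx.injective horth card_A
    (by simpa only [notMem_A] using hright) hk
  rwa [card_left, hodd.neg_one_pow, neg_one_mul, neg_nonneg] at sign

theorem angelesco_weight_ge_christoffel_general
    (hmom : ∀ k : ℕ, Integrable (fun t : ℝ => t ^ k) μ)
    (hx : StrictMono x) (horth : ∀ k < p, ∫ t, (∏ i, (t - x i)) * t ^ k ∂μ = 0)
    (hright : ∀ᵐ t ∂μ, ∀ i : Fin N, p ≤ (i : ℕ) → t ≤ x i)
    {j : Fin N} (hj : (j : ℕ) < p) :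
    christoffel μ (p + (N - p + 1) / 2) (x j) ≤ lagrangeWeight μ x j := by
  set E : Finset (Fin N) := {i | Even ((i : ℕ) - p)}
  have card_E : #E = min N p + (N - p + 1) / 2 := card_filter_even_val_sub N p
  have hjE : j ∈ E := by simp [E, Nat.sub_eq_zero_of_le hj.le]
  have card_S : #(E.erase j) = #E - 1 := card_erase_of_mem hjE
  refine christoffel_le_lagrangeWeight hmom hx.injective horth (S := E.erase j) (by omega)
    (by rw [Fintype.card_fin]; omega) (notMem_erase j E) fun k hk hkj => ?_
  refine lagrangeWeight_nonpos_of_odd hmom hx horth hright ?_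
  simpa [E, hkj] using hk

end OrderedNodes

lemma Angelesco.ae_le_node_of_le {μ₁ μ₂ : Measure ℝ} {a₁ b₁ a₂ b₂ : ℝ} {n : ℕ}
    (ad : Angelesco μ₁ μ₂ a₁ b₁ a₂ b₂ n) (hgap : b₁ ≤ a₂) (hsupp₁ : μ₁ (Set.Icc a₁ b₁)ᶜ = 0) :
    ∀ᵐ t ∂μ₁, ∀ i : Fin (2 * n), n ≤ (i : ℕ) → t ≤ ad.x i := by
  have support : ∀ᵐ t ∂μ₁, t ∈ Set.Icc a₁ b₁ := hsupp₁
  filter_upwards [support] with t ht i hi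
  exact ht.2.trans (hgap.trans (ad.mem2 i hi).1.le)

end

/-- **Lower bound of a positive quadrature weight by a Christoffel function:**
for `1 ≤ j ≤ n`, `λ_{j,2n}^{(1)} ≥ λ_m(x_{j,2n}; μ₁)` with `m = ⌈3n/2⌉`. -/
theorem angelesco_weight_ge_christoffel
    (μ₁ μ₂ : Measure ℝ) [IsFiniteMeasure μ₁] [IsFiniteMeasure μ₂]
    (a₁ b₁ a₂ b₂ : ℝ) (hab₁ : a₁ < b₁) (hgap : b₁ ≤ a₂) (hab₂ : a₂ < b₂)
    (hsupp₁ : μ₁ (Set.Icc a₁ b₁)ᶜ = 0) (hsupp₂ : μ₂ (Set.Icc a₂ b₂)ᶜ = 0)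
    (hinf₁ : ∀ s : Finset ℝ, μ₁ ((s : Set ℝ))ᶜ ≠ 0)
    (hinf₂ : ∀ s : Finset ℝ, μ₂ ((s : Set ℝ))ᶜ ≠ 0)
    (hmom₁ : ∀ k : ℕ, Integrable (fun t : ℝ => t ^ k) μ₁)
    (hmom₂ : ∀ k : ℕ, Integrable (fun t : ℝ => t ^ k) μ₂)
    (n : ℕ) (hn : 1 ≤ n) (ad : Angelesco μ₁ μ₂ a₁ b₁ a₂ b₂ n)
    (j : Fin (2 * n)) (hj : (j : ℕ) < n) :
    christoffel μ₁ ((3 * n + 1) / 2) (ad.x j) ≤ qweight ad μ₁ j := by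
  rw [show (3 * n + 1) / 2 = n + (2 * n - n + 1) / 2 by omega]
  exact angelesco_weight_ge_christoffel_general hmom₁ ad.mono ad.orth1
    (ad.ae_le_node_of_le hgap hsupp₁) hj
end
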